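/- arXiv:2412.13613 — 2 statements merged into one kernel-verified Lean document; each statement's English description precedes it below -/
import Mathlib

section
/- Let g(x) be a monic divisor of x^n - 1 in F_q[x] with g(x) h(x) = x^n - 1, and let r1(x), r2(x) in F_q[x] satisfy gcd(r_i(x), h(x)) = 1 for i = 1, 2. Let C be the one-generator quasi-cyclic code of length 2n and index 2 generated by the images in R of (r1(x)g(x), r2(x)g(x)). Then dim_{F_q}(C) = n - deg(g(x)). -/
open Polynomial Matrix

noncomputable section

variable {F : Type*} [Field F] {n : ℕ}

/-- The symplectic inner product on `F^{2n}`. -/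
def sympForm (u v : (Fin n ⊕ Fin n) → F) : F :=
  (∑ i : Fin n, u (Sum.inl i) * v (Sum.inr i)) -
    ∑ i : Fin n, v (Sum.inl i) * u (Sum.inr i)

lemma sympForm_add_left (u w v : (Fin n ⊕ Fin n) → F) :
    sympForm (u + w) v = sympForm u v + sympForm w v := by
  simp [sympForm, add_mul, mul_add, Finset.sum_add_distrib]
  ring

lemma sympForm_smul_left (c : F) (u v : (Fin n ⊕ Fin n) → F) :
    sympForm (c • u) v = c * sympForm u v := by
  simp [sympForm, Finset.mul_sum, mul_sub, mul_assoc, mul_left_comm]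

/-- The symplectic dual of a subspace of `F^{2n}`. -/
def sympDual (C : Submodule F ((Fin n ⊕ Fin n) → F)) :
    Submodule F ((Fin n ⊕ Fin n) → F) where
  carrier := {u | ∀ v ∈ C, sympForm u v = 0}
  add_mem' := by
    intro a b ha hb v hv
    rw [sympForm_add_left, ha v hv, hb v hv, add_zero]
  zero_mem' := by
    intro v hv
    have : (0 : (Fin n ⊕ Fin n) → F) = (0 : F) • 0 := by simp
    rw [this, sympForm_smul_left, zero_mul]
  smul_mem' := by
    intro c a ha v hv
    rw [sympForm_smul_left, ha v hv, mul_zero]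

/-- The `2n × 2n` symplectic matrix `Ω`. -/
def Omat (F : Type*) [Field F] (n : ℕ) : Matrix (Fin n ⊕ Fin n) (Fin n ⊕ Fin n) F :=
  Matrix.fromBlocks 0 1 (-1) 0

/-- The row space of a matrix. -/
def rowSpace {ι κ : Type*} (M : Matrix ι κ F) : Submodule F (κ → F) :=
  Submodule.span F (Set.range fun i => M i)

lemma monic_xn_sub_one (F : Type*) [Field F] {n : ℕ} (hn : n ≠ 0) :
    (X ^ n - 1 : F[X]).Monic := by
  simpa using Polynomial.monic_X_pow_sub_C (1 : F) hn

/-- The coefficient vector of the canonical degree `< n` representative of an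
element of `R = F[x]/(x^n - 1)`, as an `F`-linear map. -/
def toVecL (hn : n ≠ 0) : AdjoinRoot (X ^ n - 1 : F[X]) →ₗ[F] (Fin n → F) :=
  (LinearMap.pi fun i : Fin n => Polynomial.lcoeff F (i : ℕ)) ∘ₗ
    AdjoinRoot.modByMonicHom (monic_xn_sub_one F hn)

/-- The linear map `r ↦ (r·a, r·b)` from `R` to `F^{2n}`. -/
def QCgen (hn : n ≠ 0) (a b : AdjoinRoot (X ^ n - 1 : F[X])) :
    AdjoinRoot (X ^ n - 1 : F[X]) →ₗ[F] ((Fin n ⊕ Fin n) → F) :=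
  LinearMap.pi (Sum.elim
    (fun i => LinearMap.proj i ∘ₗ toVecL hn ∘ₗ LinearMap.mulRight F a)
    (fun i => LinearMap.proj i ∘ₗ toVecL hn ∘ₗ LinearMap.mulRight F b))

/-- The one-generator quasi-cyclic code of length `2n` and index `2`
generated by `(a(x), b(x))`, as a subspace of `F^{2n}`. -/
def QCcode (hn : n ≠ 0) (a b : AdjoinRoot (X ^ n - 1 : F[X])) :
    Submodule F ((Fin n ⊕ Fin n) → F) :=
  LinearMap.range (QCgen hn a b)

/-- The element of `R` with coefficient vector `v`. -/
def fromVec (v : Fin n → F) : AdjoinRoot (X ^ n - 1 : F[X]) :=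
  AdjoinRoot.mk _ (∑ i : Fin n, Polynomial.C (v i) * X ^ (i : ℕ))

/-- The transpose polynomial `ā(x) = x^n a(x⁻¹) mod (x^n - 1)`. -/
def transposePoly (hn : n ≠ 0) (a : AdjoinRoot (X ^ n - 1 : F[X])) :
    AdjoinRoot (X ^ n - 1 : F[X]) :=
  fromVec (fun i => toVecL hn a (-i))

/-- The cyclic code of length `n` generated by (the image of) `g(x)`. -/
def cyclicCode (hn : n ≠ 0) (g : F[X]) : Submodule F (Fin n → F) :=
  LinearMap.range (toVecL hn ∘ₗ
    LinearMap.mulRight F (AdjoinRoot.mk (X ^ n - 1 : F[X]) g))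

/-- The Hamming weight of a vector. -/
def hWeight {ι : Type*} (u : ι → F) : ℕ := {i | u i ≠ 0}.ncard

/-!
Multiplication of `r` by the generator `(r₁ g, r₂ g)` gives `0` in `R²` exactly when
`h = (xⁿ - 1) / g` divides both `r r₁` and `r r₂`. Since `r₁`, `r₂` and `h` generate the unit
ideal, this means that `h` divides `r`, so `C ≅ F[x] / (h)`, which has dimension
`deg h = n - deg g`.
-/

lemma natDegree_X_pow_sub_one {R : Type*} [Ring R] [Nontrivial R] (n : ℕ) :
    (X ^ n - 1 : R[X]).natDegree = n := by
  rw [← C_1, natDegree_X_pow_sub_C]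

lemma dvd_mul_and_dvd_mul_iff_dvd {R : Type*} [CommSemiring R] {a b d : R}
    (hspan : Ideal.span {a, b, d} = ⊤) (p : R) : d ∣ p * a ∧ d ∣ p * b ↔ d ∣ p := by
  refine ⟨fun ⟨hpa, hpb⟩ => ?_, fun hp => ⟨hp.mul_right a, hp.mul_right b⟩⟩
  rw [← Ideal.mem_span_singleton]
  refine Submodule.mem_of_span_top_of_smul_mem _ _ hspan p ?_
  rintro ⟨c, rfl | rfl | rfl⟩ <;>
    simp [Ideal.mem_span_singleton, mul_comm _ p, hpa, hpb]

lemma span_triple_eq_top_of_isCoprime {R : Type*} [CommRing R] {a d : R} (had : IsCoprime a d)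
    (b : R) : Ideal.span {a, b, d} = ⊤ := by
  obtain ⟨u, v, huv⟩ := had
  rw [Ideal.eq_top_iff_one]
  exact Submodule.mem_span_triple.2 ⟨u, 0, v, by simpa using huv⟩

lemma mk_mul_mk_mul_eq_zero_iff_dvd {R : Type*} [CommRing R] [NoZeroDivisors R] {f g h : R[X]}
    (hg : g ≠ 0) (hgh : g * h = f) (p r : R[X]) :
    AdjoinRoot.mk f p * AdjoinRoot.mk f (r * g) = 0 ↔ h ∣ p * r := by
  rw [← map_mul, AdjoinRoot.mk_eq_zero, ← hgh, ← mul_assoc, mul_comm _ g,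
    mul_dvd_mul_iff_left hg]

lemma finrank_range_of_mk_eq_zero_iff_dvd {V : Type*} [AddCommGroup V] [Module F V] {f h : F[X]}
    (φ : AdjoinRoot f →ₗ[F] V) (hφ : ∀ p, φ (AdjoinRoot.mk f p) = 0 ↔ h ∣ p) :
    Module.finrank F (LinearMap.range φ) = h.natDegree := by
  let ψ : F[X] →ₗ[F] V := φ ∘ₗ (AdjoinRoot.mkₐ f).toLinearMap
  have range_ψ : LinearMap.range ψ = LinearMap.range φ :=
    LinearMap.range_comp_of_range_eq_top φ (LinearMap.range_eq_top.2 AdjoinRoot.mk_surjective)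
  have ker_ψ : LinearMap.ker ψ = (Ideal.span {h}).restrictScalars F := by
    ext p
    rw [Submodule.restrictScalars_mem, Ideal.mem_span_singleton]
    exact hφ p
  calc Module.finrank F (LinearMap.range φ)
      = Module.finrank F (F[X] ⧸ LinearMap.ker ψ) := by
        rw [← range_ψ, ψ.quotKerEquivRange.finrank_eq]
    _ = Module.finrank F (F[X] ⧸ Ideal.span {h}) := by
        rw [ker_ψ]
        rfl
    _ = h.natDegree := finrank_quotient_span_eq_natDegree

lemma toVecL_injective (hn : n ≠ 0) : Function.Injective (toVecL (F := F) hn) := by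
  rw [← LinearMap.ker_eq_bot, LinearMap.ker_eq_bot']
  intro a ha
  obtain ⟨p, rfl⟩ := AdjoinRoot.mk_surjective a
  have monic := monic_xn_sub_one F hn
  rw [AdjoinRoot.mk_eq_zero, ← modByMonic_eq_zero_iff_dvd monic]
  have degree_lt : (p %ₘ (X ^ n - 1)).degree < n := by
    simpa only [degree_eq_natDegree monic.ne_zero, natDegree_X_pow_sub_one]
      using degree_modByMonic_lt p monic
  rw [← degreeLTEquiv_eq_zero_iff_eq_zero (mem_degreeLT.2 degree_lt)]
  exact ha

lemma QCgen_eq_zero_iff (hn : n ≠ 0) (a b r : AdjoinRoot (X ^ n - 1 : F[X])) :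
    QCgen hn a b r = 0 ↔ r * a = 0 ∧ r * b = 0 := by
  rw [← map_eq_zero_iff _ (toVecL_injective hn), ← map_eq_zero_iff _ (toVecL_injective hn)]
  simp only [funext_iff, Sum.forall]
  rfl

theorem oneGenQC_sameG_dim_general (hn : n ≠ 0) (g h r₁ r₂ : F[X])
    (hgh : g * h = X ^ n - 1) (hspan : Ideal.span {r₁, r₂, h} = ⊤) :
    Module.finrank F
        (QCcode hn (AdjoinRoot.mk (X ^ n - 1 : F[X]) (r₁ * g))
          (AdjoinRoot.mk (X ^ n - 1 : F[X]) (r₂ * g))) =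
      n - g.natDegree := by
  have hgh_ne : g * h ≠ 0 := hgh ▸ (monic_xn_sub_one F hn).ne_zero
  have hg : g ≠ 0 := left_ne_zero_of_mul hgh_ne
  have natDegree_add : g.natDegree + h.natDegree = n := by
    rw [← natDegree_mul hg (right_ne_zero_of_mul hgh_ne), hgh, natDegree_X_pow_sub_one]
  refine (finrank_range_of_mk_eq_zero_iff_dvd (h := h) _ fun p => ?_).trans
    (Nat.eq_sub_of_add_eq' natDegree_add)
  rw [QCgen_eq_zero_iff, mk_mul_mk_mul_eq_zero_iff_dvd hg hgh,
    mk_mul_mk_mul_eq_zero_iff_dvd hg hgh, dvd_mul_and_dvd_mul_iff_dvd hspan]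

/-- If `C = (r₁(x)g(x), r₂(x)g(x))` is a one-generator QC
code with `g h = xⁿ - 1` and `gcd(rᵢ, h) = 1` for `i = 1, 2`, then
`dim C = n - deg g`. -/
theorem oneGenQC_sameG_dim
    {F : Type*} [Field F] [Fintype F] {n : ℕ} (hn : n ≠ 0)
    (g h r₁ r₂ : F[X]) (hg : g.Monic) (hgh : g * h = X ^ n - 1)
    (hr₁ : IsCoprime r₁ h) (hr₂ : IsCoprime r₂ h) :
    Module.finrank F
        (QCcode hn (AdjoinRoot.mk (X ^ n - 1 : F[X]) (r₁ * g))
          (AdjoinRoot.mk (X ^ n - 1 : F[X]) (r₂ * g))) =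
      n - g.natDegree :=
  oneGenQC_sameG_dim_general hn g h r₁ r₂ hgh
    (span_triple_eq_top_of_isCoprime hr₁ r₂)

end
end

section
/- Let C ⊆ F_q^{2n} be a linear code and let p_1(x), q_1(x), p_2(x), q_2(x) ∈ R be such that the row space of the 2n×2n block matrix H = ((P_1, Q_1), (P_2, Q_2)), with P_i, Q_i the circulant matrices generated by p_i(x), q_i(x), equals the symplectic dual C^{⊥s}. Then C^{⊥s} ⊆ C if and only if p_1(x)q̄_1(x) - q_1(x)p̄_1(x) ≡ 0 mod (x^n - 1), p_2(x)q̄_2(x) - q_2(x)p̄_2(x) ≡ 0 mod (x^n - 1), and p_1(x)q̄_2(x) - q_1(x)p̄_2(x) ≡ 0 mod (x^n - 1), where p̄(x) denotes the transpose polynomial of p(x). -/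
open Polynomial Matrix

noncomputable section

variable {F : Type*} [Field F] {n : ℕ}

/-!
The row space of `H` is totally isotropic for the symplectic form iff `H Ω Hᵀ = 0`, and the
symplectic double dual of `C` is `C`, so the dual-containing condition is `H Ω Hᵀ = 0`. The
circulant matrix of `a ∈ F[x]/(xⁿ - 1)` is the matrix of multiplication by `a` in the basis
`1, x, …, xⁿ⁻¹`, so `a ↦ circ(a)` is an injective ring homomorphism, and it turns `ā` into the
transpose of `circ(a)`. The blocks of `H Ω Hᵀ` are therefore the images of the polynomials
`pᵢ q̄ⱼ - qᵢ p̄ⱼ`, where the `(2,1)` block is minus the transpose of the `(1,2)` block.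
-/

/-- The symplectic form on `F^{2n}`, bundled as a bilinear form so that the orthogonal complements
of Mathlib apply to it. -/
def sympBilin (F : Type*) [Field F] (n : ℕ) : LinearMap.BilinForm F ((Fin n ⊕ Fin n) → F) :=
  Matrix.toBilin' (Omat F n)

theorem sympBilin_apply (u v : (Fin n ⊕ Fin n) → F) : sympBilin F n u v = sympForm u v := by
  simp [sympBilin, Matrix.toBilin'_apply', Omat, sympForm, Matrix.fromBlocks_mulVec,
    dotProduct, Fintype.sum_sum_type, sub_eq_add_neg, neg_mulVec, mul_comm]

theorem sympBilin_isAlt : (sympBilin F n).IsAlt := fun u => by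
  rw [sympBilin_apply, sympForm, sub_self]

theorem Omat_eq_transpose_J : Omat F n = (Matrix.J (Fin n) F)ᵀ := by
  simp [Omat, Matrix.J, Matrix.fromBlocks_transpose]

theorem sympBilin_nondegenerate : (sympBilin F n).Nondegenerate := by
  refine LinearMap.BilinForm.nondegenerate_toBilin'_of_det_ne_zero' _ ?_
  rw [Omat_eq_transpose_J, Matrix.det_transpose]
  exact (Matrix.isUnit_det_J (Fin n) F).ne_zero

theorem sympDual_eq_orthogonal (C : Submodule F ((Fin n ⊕ Fin n) → F)) :
    sympDual C = (sympBilin F n).orthogonal C := by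
  ext u
  refine forall₂_congr fun v _ => ?_
  rw [← sympBilin_apply]
  exact sympBilin_isAlt.isRefl.eq_iff

theorem sympDual_sympDual (C : Submodule F ((Fin n ⊕ Fin n) → F)) :
    sympDual (sympDual C) = C := by
  rw [sympDual_eq_orthogonal, sympDual_eq_orthogonal,
    LinearMap.BilinForm.orthogonal_orthogonal sympBilin_nondegenerate sympBilin_isAlt.isRefl]

theorem mul_Omat_mul_transpose_apply {ι κ : Type*} (M : Matrix ι (Fin n ⊕ Fin n) F)
    (N : Matrix κ (Fin n ⊕ Fin n) F) (i : ι) (k : κ) :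
    (M * Omat F n * Nᵀ) i k = sympForm (M i) (N k) := by
  rw [← sympBilin_apply, sympBilin, Matrix.toBilin'_apply', Matrix.dotProduct_mulVec]
  rfl

theorem mem_sympDual_rowSpace_iff {κ : Type*} (N : Matrix κ (Fin n ⊕ Fin n) F)
    (u : (Fin n ⊕ Fin n) → F) :
    u ∈ sympDual (rowSpace N) ↔ ∀ k, sympForm u (N k) = 0 := by
  have le_ker_iff : u ∈ sympDual (rowSpace N) ↔ rowSpace N ≤ (sympBilin F n u).ker :=
    forall₂_congr fun v _ => by rw [LinearMap.mem_ker, sympBilin_apply]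
  rw [le_ker_iff, rowSpace, Submodule.span_le, Set.range_subset_iff]
  simp only [SetLike.mem_coe, LinearMap.mem_ker, sympBilin_apply]

theorem rowSpace_le_sympDual_rowSpace_iff {ι κ : Type*} (M : Matrix ι (Fin n ⊕ Fin n) F)
    (N : Matrix κ (Fin n ⊕ Fin n) F) :
    rowSpace M ≤ sympDual (rowSpace N) ↔ M * Omat F n * Nᵀ = 0 := by
  rw [rowSpace, Submodule.span_le, Set.range_subset_iff, ← Matrix.ext_iff]
  simp only [SetLike.mem_coe, mem_sympDual_rowSpace_iff, mul_Omat_mul_transpose_apply,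
    Matrix.zero_apply]

theorem sympDual_le_iff_of_rowSpace_eq {ι : Type*} {M : Matrix ι (Fin n ⊕ Fin n) F}
    {C : Submodule F ((Fin n ⊕ Fin n) → F)} (hM : rowSpace M = sympDual C) :
    sympDual C ≤ C ↔ M * Omat F n * Mᵀ = 0 := by
  rw [← rowSpace_le_sympDual_rowSpace_iff, hM, sympDual_sympDual]

theorem fromBlocks_mul_Omat_mul_transpose_eq_zero_iff {l m : Type*}
    (A B : Matrix l (Fin n) F) (C D : Matrix m (Fin n) F) :
    fromBlocks A B C D * Omat F n * (fromBlocks A B C D)ᵀ = 0 ↔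
      A * Bᵀ - B * Aᵀ = 0 ∧ C * Dᵀ - D * Cᵀ = 0 ∧ A * Dᵀ - B * Cᵀ = 0 := by
  have blocks : fromBlocks A B C D * Omat F n * (fromBlocks A B C D)ᵀ =
      fromBlocks (A * Bᵀ - B * Aᵀ) (A * Dᵀ - B * Cᵀ) (C * Bᵀ - D * Aᵀ) (C * Dᵀ - D * Cᵀ) := by
    simp [Omat, fromBlocks_transpose, fromBlocks_multiply, sub_eq_add_neg, add_comm]
  have lower_left : C * Bᵀ - D * Aᵀ = -(A * Dᵀ - B * Cᵀ)ᵀ := by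
    simp [transpose_mul]
  rw [blocks, lower_left, ← fromBlocks_zero, fromBlocks_inj, neg_eq_zero, transpose_eq_zero]
  tauto

/-- The basis `1, x, …, xⁿ⁻¹` of `F[x]/(xⁿ - 1)`, indexed by `Fin n` so that exponents add
modulo `n`. -/
def rootPowBasis (hn : n ≠ 0) : Module.Basis (Fin n) F (AdjoinRoot (X ^ n - 1 : F[X])) :=
  (AdjoinRoot.powerBasis' (monic_xn_sub_one F hn)).basis.reindex
    (finCongr (natDegree_X_pow_sub_C (r := (1 : F))))

theorem rootPowBasis_apply (hn : n ≠ 0) (i : Fin n) :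
    rootPowBasis hn i = AdjoinRoot.root (X ^ n - 1 : F[X]) ^ (i : ℕ) := by
  rw [rootPowBasis, Module.Basis.reindex_apply, PowerBasis.basis_eq_pow]
  rfl

theorem rootPowBasis_repr (hn : n ≠ 0) (a : AdjoinRoot (X ^ n - 1 : F[X])) :
    ⇑((rootPowBasis hn).repr a) = toVecL hn a := by
  ext i
  rw [rootPowBasis, Module.Basis.repr_reindex_apply]
  rfl

theorem fromVec_eq_sum (hn : n ≠ 0) (v : Fin n → F) :
    fromVec v = ∑ i, v i • rootPowBasis hn i := by
  simp [fromVec, rootPowBasis_apply, Algebra.smul_def]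

theorem toVecL_fromVec (hn : n ≠ 0) (v : Fin n → F) : toVecL hn (fromVec v) = v := by
  rw [← rootPowBasis_repr, fromVec_eq_sum hn, Module.Basis.repr_sum_self]

theorem root_X_pow_sub_one_pow : AdjoinRoot.root (X ^ n - 1 : F[X]) ^ n = 1 := by
  have h := AdjoinRoot.eval₂_root (X ^ n - 1 : F[X])
  rwa [eval₂_sub, eval₂_X_pow, eval₂_one, sub_eq_zero] at h

theorem rootPowBasis_mul (hn : n ≠ 0) (i j : Fin n) :
    rootPowBasis (F := F) hn i * rootPowBasis hn j = rootPowBasis hn (i + j) := by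
  rw [rootPowBasis_apply, rootPowBasis_apply, rootPowBasis_apply, ← pow_add, Fin.val_add,
    ← pow_eq_pow_mod _ root_X_pow_sub_one_pow]

theorem toVecL_mul_rootPowBasis (hn : n ≠ 0) (a : AdjoinRoot (X ^ n - 1 : F[X])) (i j : Fin n) :
    toVecL hn (a * rootPowBasis hn j) i = toVecL hn a (i - j) := by
  have : NeZero n := ⟨hn⟩
  suffices LinearMap.proj i ∘ₗ toVecL hn ∘ₗ LinearMap.mulRight F (rootPowBasis hn j) =
      LinearMap.proj (i - j) ∘ₗ toVecL hn from LinearMap.congr_fun this a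
  refine (rootPowBasis hn).ext fun k => ?_
  simp only [LinearMap.comp_apply, LinearMap.mulRight_apply, LinearMap.proj_apply,
    rootPowBasis_mul, ← rootPowBasis_repr, Module.Basis.repr_self, Finsupp.single_apply,
    eq_sub_iff_add_eq]

theorem leftMulMatrix_rootPowBasis (hn : n ≠ 0) (a : AdjoinRoot (X ^ n - 1 : F[X])) :
    Algebra.leftMulMatrix (rootPowBasis hn) a = circulant (toVecL hn a) := by
  ext i j
  rw [Algebra.leftMulMatrix_eq_repr_mul, rootPowBasis_repr, toVecL_mul_rootPowBasis,
    circulant_apply]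

theorem circulant_toVecL_transposePoly (hn : n ≠ 0) (a : AdjoinRoot (X ^ n - 1 : F[X])) :
    circulant (toVecL hn (transposePoly hn a)) = (circulant (toVecL hn a))ᵀ := by
  rw [transposePoly, toVecL_fromVec, Fin.transpose_circulant]

theorem circulant_mul_transpose_sub_eq_zero_iff (hn : n ≠ 0)
    (a b c d : AdjoinRoot (X ^ n - 1 : F[X])) :
    circulant (toVecL hn a) * (circulant (toVecL hn d))ᵀ -
        circulant (toVecL hn b) * (circulant (toVecL hn c))ᵀ = 0 ↔
      a * transposePoly hn d - b * transposePoly hn c = 0 := by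
  rw [← circulant_toVecL_transposePoly, ← circulant_toVecL_transposePoly]
  simp only [← leftMulMatrix_rootPowBasis, ← map_mul, ← map_sub]
  exact map_eq_zero_iff (Algebra.leftMulMatrix (rootPowBasis hn))
    (Algebra.leftMulMatrix_injective (rootPowBasis hn))

theorem twoGenQC_dualContaining_iff_poly_general (hn : n ≠ 0)
    (p₁ q₁ p₂ q₂ : AdjoinRoot (X ^ n - 1 : F[X]))
    (C : Submodule F ((Fin n ⊕ Fin n) → F))
    (hH : rowSpace (Matrix.fromBlocks
        (Matrix.circulant (toVecL hn p₁)) (Matrix.circulant (toVecL hn q₁))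
        (Matrix.circulant (toVecL hn p₂)) (Matrix.circulant (toVecL hn q₂))) =
      sympDual C) :
    sympDual C ≤ C ↔
      p₁ * transposePoly hn q₁ - q₁ * transposePoly hn p₁ = 0 ∧
        p₂ * transposePoly hn q₂ - q₂ * transposePoly hn p₂ = 0 ∧
          p₁ * transposePoly hn q₂ - q₁ * transposePoly hn p₂ = 0 := by
  rw [sympDual_le_iff_of_rowSpace_eq hH, fromBlocks_mul_Omat_mul_transpose_eq_zero_iff]
  simp only [circulant_mul_transpose_sub_eq_zero_iff]

/-- Suppose the two-generator QC code `C` has a parity-check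
matrix `H = ((P₁, Q₁), (P₂, Q₂))`, built from the circulant matrices of
`p₁, q₁, p₂, q₂`, whose row space is `C^{⊥s}`. Then `C` is symplectic
dual-containing iff `p₁q̄₁ - q₁p̄₁ ≡ 0`, `p₂q̄₂ - q₂p̄₂ ≡ 0` and
`p₁q̄₂ - q₁p̄₂ ≡ 0 mod (xⁿ - 1)`. -/
theorem twoGenQC_dualContaining_iff_poly
    {F : Type*} [Field F] [Fintype F] {n : ℕ} (hn : n ≠ 0)
    (p₁ q₁ p₂ q₂ : AdjoinRoot (X ^ n - 1 : F[X]))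
    (C : Submodule F ((Fin n ⊕ Fin n) → F))
    (hH : rowSpace (Matrix.fromBlocks
        (Matrix.circulant (toVecL hn p₁)) (Matrix.circulant (toVecL hn q₁))
        (Matrix.circulant (toVecL hn p₂)) (Matrix.circulant (toVecL hn q₂))) =
      sympDual C) :
    sympDual C ≤ C ↔
      p₁ * transposePoly hn q₁ - q₁ * transposePoly hn p₁ = 0 ∧
        p₂ * transposePoly hn q₂ - q₂ * transposePoly hn p₂ = 0 ∧
          p₁ * transposePoly hn q₂ - q₁ * transposePoly hn p₂ = 0 :=
  twoGenQC_dualContaining_iff_poly_general hn p₁ q₁ p₂ q₂ C hH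

end
end
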